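/- arXiv:math/0201175 — 2 statements merged into one kernel-verified Lean document; each statement's English description precedes it below -/
import Mathlib

section
/- Let R be a commutative ring, t ∈ R a non-zero-divisor, and I ⊆ R an ideal such that the pair (R, tI) is henselian. Let R^ := lim_n R/tⁿI be the (t,I)-adic completion of R. Then base change along the natural ring homomorphism R[t⁻¹] → R^[t⁻¹] induces a bijection on isomorphism classes of finitely generated projective modules; that is: (a) for any two finitely generated projective R[t⁻¹]-modules P, P′, if P ⊗_{R[t⁻¹]} R^[t⁻¹] ≅ P′ ⊗_{R[t⁻¹]} R^[t⁻¹] as R^[t⁻¹]-modules, then P ≅ P′; and (b) every finitely generated projective R^[t⁻¹]-module is isomorphic to P ⊗_{R[t⁻¹]} R^[t⁻¹] for some finitely generated projective R[t⁻¹]-module P. -/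
set_option synthInstance.maxHeartbeats 2000000
set_option maxHeartbeats 8000000

/-- The ideal `tⁿI = (tⁿ)·I` of `R`. -/
def tPowIdeal (R : Type) [CommRing R] (t : R) (I : Ideal R) (n : ℕ) : Ideal R :=
  Ideal.span {t ^ n} * I

/-- Transition map `R/tᵐI → R/tⁿI` for `n ≤ m`. -/
def tTrans (R : Type) [CommRing R] (t : R) (I : Ideal R) (n m : ℕ) (hnm : n ≤ m) :
    R ⧸ tPowIdeal R t I m →+* R ⧸ tPowIdeal R t I n :=
  Ideal.Quotient.lift _ (Ideal.Quotient.mk _)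
    (fun a ha => Ideal.Quotient.eq_zero_iff_mem.mpr
      (Ideal.mul_mono (Ideal.span_singleton_le_span_singleton.mpr (pow_dvd_pow t hnm))
        le_rfl ha))

/-- The `(t,I)`-adic completion `R^ := lim_n R/tⁿI`, realized as the subring of compatible
sequences in `∏_n R/tⁿI`. -/
def tIComp (R : Type) [CommRing R] (t : R) (I : Ideal R) :
    Subring (∀ n : ℕ, R ⧸ tPowIdeal R t I n) where
  carrier := { x | ∀ (n m : ℕ) (hnm : n ≤ m), tTrans R t I n m hnm (x m) = x n }
  zero_mem' := fun n m hnm => by simp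
  one_mem' := fun n m hnm => by simp
  add_mem' := fun {x y} hx hy n m hnm => by simp [hx n m hnm, hy n m hnm]
  mul_mem' := fun {x y} hx hy n m hnm => by simp [hx n m hnm, hy n m hnm]
  neg_mem' := fun {x} hx n m hnm => by simp [hx n m hnm]

/-- The canonical ring homomorphism `R → R^`. -/
def toTIComp (R : Type) [CommRing R] (t : R) (I : Ideal R) : R →+* tIComp R t I :=
  RingHom.codRestrict (Pi.ringHom fun n => Ideal.Quotient.mk (tPowIdeal R t I n))
    (tIComp R t I) (fun r n m hnm => Ideal.Quotient.lift_mk _ _ _)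

/-- The canonical ring homomorphism `R[t⁻¹] → R^[t⁻¹]` induced by `R → R^`. -/
noncomputable def locMap (R : Type) [CommRing R] (t : R) (I : Ideal R) :
    Localization.Away t →+* Localization.Away (toTIComp R t I t) :=
  IsLocalization.Away.map (Localization.Away t) (Localization.Away (toTIComp R t I t))
    (toTIComp R t I) t



theorem aux_isUnit_of_mk {R : Type} [CommRing R] {J : Ideal R} (hJ : J ≤ Ideal.jacobson ⊥) (a : R)
    (h : IsUnit (Ideal.Quotient.mk J a)) : IsUnit a :=
  have := isLocalHom_of_le_jacobson_bot J hJ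
  isUnit_of_map_unit _ _ h

theorem aux_ker_le {R U : Type} [CommRing R] [CommRing U] [Algebra R U] (J : Ideal R)
    (r : U) [Algebra.FormallyUnramified R (Localization.Away r)]
    (s : U →ₐ[R] R ⧸ J) (hs : IsUnit (s r)) (x : U) (hx : s x = 0) :
    x ∈ (RingHom.ker s) ^ 2 ⊔ J.map (algebraMap R U) := by
  set p : Ideal U := RingHom.ker s with hp
  set K : Ideal U := p ^ 2 ⊔ J.map (algebraMap R U) with hK
  let π : U →ₐ[R] U ⧸ K := Ideal.Quotient.mkₐ R K
  have hπ : ∀ u, π u = Ideal.Quotient.mk K u := fun u => rfl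
  let I : Ideal (U ⧸ K) := p.map (Ideal.Quotient.mk K)
  have hI2 : I ^ 2 = ⊥ := by
    rw [← Ideal.map_pow, Ideal.map_eq_bot_iff_le_ker, Ideal.mk_ker]
    exact le_sup_left
  have hI : IsNilpotent I := ⟨2, hI2⟩
  let ι : R ⧸ J →ₐ[R] U ⧸ K := Ideal.Quotient.liftₐ J (Algebra.ofId R _) (by
    intro a ha
    have : algebraMap R (U ⧸ K) a = Ideal.Quotient.mk K (algebraMap R U a) := rfl
    rw [Algebra.ofId_apply, this, Ideal.Quotient.eq_zero_iff_mem]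
    exact le_sup_right (a := p ^ 2) (Ideal.mem_map_of_mem _ ha))
  have hnear : ∀ u, π u - ι (s u) ∈ I := by
    intro u
    obtain ⟨c, hc⟩ := Ideal.Quotient.mk_surjective (s u)
    have h1 : u - algebraMap R U c ∈ p := by
      rw [hp, RingHom.mem_ker, map_sub, AlgHom.commutes, ← hc]
      exact sub_self _
    have h2 : ι (s u) = π (algebraMap R U c) := by
      rw [← hc]; rfl
    rw [h2, ← map_sub, hπ]
    exact Ideal.mem_map_of_mem _ h1
  have hu2 : IsUnit ((ι.comp s) r) := hs.map ι
  have hu1 : IsUnit (π r) := by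
    have h3 : IsNilpotent (π r - ι (s r)) := ⟨2, by
      have := Ideal.pow_mem_pow (hnear r) 2
      rw [hI2] at this; exact this⟩
    have := h3.isUnit_add_left_of_commute hu2 (Commute.all _ _)
    simpa using this
  let g₁ : Localization.Away r →ₐ[R] U ⧸ K := IsLocalization.Away.liftAlgHom r hu1
  let g₂ : Localization.Away r →ₐ[R] U ⧸ K := IsLocalization.Away.liftAlgHom r hu2
  have e1 : ∀ u, g₁ (algebraMap U _ u) = π u := fun u => by
    simp [g₁, IsLocalization.Away.liftAlgHom_apply]
  have e2 : ∀ u, g₂ (algebraMap U _ u) = ι (s u) := fun u => by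
    simp [g₂, IsLocalization.Away.liftAlgHom_apply]
  have key : g₁ = g₂ := by
    refine Algebra.FormallyUnramified.ext I hI ?_
    have : (Ideal.Quotient.mkₐ R I).comp g₁ = (Ideal.Quotient.mkₐ R I).comp g₂ := by
      refine IsLocalization.algHom_ext (Submonoid.powers r) ?_
      ext u
      change Ideal.Quotient.mk I (g₁ (algebraMap U _ u)) = Ideal.Quotient.mk I (g₂ (algebraMap U _ u))
      rw [e1, e2, Ideal.Quotient.eq]
      exact hnear u
    exact fun x => congr($this x)
  have := e1 x
  rw [key, e2, hx, map_zero, hπ] at this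
  exact Ideal.Quotient.eq_zero_iff_mem.mp this.symm

theorem aux_sup {U : Type} [CommRing U] (p q K : Ideal U) (h : p ≤ q ⊔ K) :
    p ^ 2 ⊔ K ≤ q * q ⊔ K := by
  refine sup_le ?_ le_sup_right
  refine (Ideal.pow_right_mono h 2).trans ?_
  rw [pow_two, Ideal.sup_mul, Ideal.mul_sup]
  refine sup_le (sup_le le_sup_left ?_) ?_
  · exact (Ideal.mul_le_right (I := q) (J := K)).trans le_sup_right
  · exact (Ideal.mul_le_left (I := K) (J := q ⊔ K)).trans le_sup_right

theorem aux_eta {R U : Type} [CommRing R] [CommRing U] [Algebra R U] [Module.Finite R U] (J : Ideal R)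
    (s : U →ₐ[R] R ⧸ J)
    (hk : ∀ x, s x = 0 → x ∈ (RingHom.ker s) ^ 2 ⊔ J.map (algebraMap R U)) :
    ∃ η : U, s η = 1 ∧ ∀ u c, s u = Ideal.Quotient.mk J c →
      η * u - c • η ∈ J.map (algebraMap R U) := by
  obtain ⟨n, x, hx⟩ := Module.Finite.exists_fin (R := R) (M := U)
  choose c hc using fun i => Ideal.Quotient.mk_surjective (s (x i))
  let K := J.map (algebraMap R U)
  let q : Ideal U := Ideal.span (Set.range fun i => x i - algebraMap R U (c i))
  have hJs : ∀ u ∈ K, s u = 0 := by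
    have : K ≤ RingHom.ker s := Ideal.map_le_iff_le_comap.mpr fun a ha => by
      simp only [Ideal.mem_comap, RingHom.mem_ker, AlgHom.commutes]
      exact Ideal.Quotient.eq_zero_iff_mem.mpr ha
    exact fun u hu => this hu
  have hqs : ∀ u ∈ q, s u = 0 := by
    have : q ≤ RingHom.ker s := Ideal.span_le.mpr (by
      rintro _ ⟨i, rfl⟩
      simp only [SetLike.mem_coe, RingHom.mem_ker, map_sub, AlgHom.commutes, ← hc]
      exact sub_self _)
    exact fun u hu => this hu
  have hq1 : ∀ u : U, ∃ a : R, u - algebraMap R U a ∈ q := by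
    intro u
    have hu : u ∈ Submodule.span R (Set.range x) := hx ▸ Submodule.mem_top
    induction hu using Submodule.span_induction with
    | mem y hy =>
      obtain ⟨i, rfl⟩ := hy
      exact ⟨c i, Ideal.subset_span ⟨i, rfl⟩⟩
    | zero => exact ⟨0, by simp⟩
    | add y z _ _ hy hz =>
      obtain ⟨a, ha⟩ := hy
      obtain ⟨b, hb⟩ := hz
      refine ⟨a + b, ?_⟩
      rw [map_add, add_sub_add_comm]
      exact add_mem ha hb
    | smul k y _ hy =>
      obtain ⟨a, ha⟩ := hy
      refine ⟨k * a, ?_⟩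
      have : k • y - algebraMap R U (k * a) = algebraMap R U k * (y - algebraMap R U a) := by
        rw [Algebra.smul_def, map_mul]; ring
      rw [this]; exact Ideal.mul_mem_left _ _ ha
  have hker : RingHom.ker s ≤ q ⊔ K := by
    intro u hu
    obtain ⟨a, ha⟩ := hq1 u
    have h0 : s (algebraMap R U a) = 0 := by
      have := hqs _ ha
      rw [map_sub, (RingHom.mem_ker).mp hu, zero_sub, neg_eq_zero] at this
      exact this
    rw [AlgHom.commutes] at h0
    have : a ∈ J := Ideal.Quotient.eq_zero_iff_mem.mp h0
    rw [← sub_add_cancel u (algebraMap R U a)]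
    exact add_mem (Ideal.mem_sup_left ha) (Ideal.mem_sup_right (Ideal.mem_map_of_mem _ this))
  let qb : Ideal (U ⧸ K) := q.map (Ideal.Quotient.mk K)
  have hfg : qb.FG := Ideal.FG.map (Submodule.fg_span (Set.finite_range _)) _
  have hid : IsIdempotentElem qb := by
    refine le_antisymm Ideal.mul_le_right ?_
    rw [← Ideal.map_mul]
    intro y hy
    have hqb : qb ≤ (q * q).map (Ideal.Quotient.mk K) := by
      refine Ideal.map_le_iff_le_comap.mpr fun u hu => ?_
      have h1 := hk u (hqs u hu)
      have h2 : (RingHom.ker s) ^ 2 ⊔ K ≤ (q * q) ⊔ K := by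
        exact aux_sup _ _ _ hker
      have h3 := h2 h1
      rw [Ideal.mem_comap]
      have h4 := Ideal.mem_map_of_mem (Ideal.Quotient.mk K) h3
      rw [Ideal.map_sup, Ideal.map_quotient_self, sup_bot_eq] at h4
      exact h4
    exact hqb hy
  obtain ⟨e, he, hqe⟩ := (Ideal.isIdempotentElem_iff_of_fg qb hfg).mp hid
  obtain ⟨η₀, rfl⟩ := Ideal.Quotient.mk_surjective e
  have hη₀ : s η₀ = 0 := by
    have : Ideal.Quotient.mk K η₀ ∈ qb := by
      rw [hqe]; exact Ideal.mem_span_singleton_self _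
    rw [Ideal.mem_map_iff_of_surjective _ Ideal.Quotient.mk_surjective] at this
    obtain ⟨v, hv, hv'⟩ := this
    have := hJs _ (Ideal.Quotient.eq.mp hv')
    rw [map_sub, hqs v hv, zero_sub, neg_eq_zero] at this
    exact this
  refine ⟨1 - η₀, by simp [hη₀], fun u a hua => ?_⟩
  have h1 : u - algebraMap R U a ∈ RingHom.ker s := by
    rw [RingHom.mem_ker, map_sub, AlgHom.commutes, hua]
    exact sub_self _
  have h2 : Ideal.Quotient.mk K (u - algebraMap R U a) ∈ qb := by
    have h4 := Ideal.mem_map_of_mem (Ideal.Quotient.mk K) (hker h1)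
    rw [Ideal.map_sup, Ideal.map_quotient_self, sup_bot_eq] at h4
    exact h4
  rw [hqe] at h2
  obtain ⟨w, hw⟩ := Ideal.mem_span_singleton'.mp h2
  have : (1 - η₀) * u - a • (1 - η₀) = (1 - η₀) * (u - algebraMap R U a) := by
    rw [Algebra.smul_def]; ring
  rw [this]
  refine Ideal.Quotient.eq_zero_iff_mem.mp ?_
  rw [map_mul, ← hw, map_sub, map_one]
  have he' : Ideal.Quotient.mk K η₀ * Ideal.Quotient.mk K η₀ = Ideal.Quotient.mk K η₀ := he
  linear_combination (-w) * he'

open Polynomial in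
theorem aux_poly {R U : Type} [CommRing R] [CommRing U] [Algebra R U] [Module.Finite R U] (J : Ideal R)
    (hJ : J ≤ Ideal.jacobson ⊥) (η : U)
    (s : U →ₐ[R] R ⧸ J) (h1 : s η = 1) 
    (h2 : ∀ u c, s u = Ideal.Quotient.mk J c → η * u - c • η ∈ J.map (algebraMap R U)) :
    ∃ (F : R[X]) (N : ℕ), F.Monic ∧ aeval η F = 0 ∧
      F.map (Ideal.Quotient.mk J) = (X - 1) * X ^ N := by
  classical
  obtain ⟨n, x, hx⟩ := Module.Finite.exists_fin (R := R) (M := U)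
  let u : Option (Fin n) → U := fun o => o.elim η (fun i => (1 - η) * x i)
  have hmap : ∀ z, z ∈ J.map (algebraMap R U) ↔ z ∈ J • (⊤ : Submodule R U) := by
    intro z; rw [Ideal.smul_top_eq_map]; rfl
  have hspan : Submodule.span R (Set.range u) = ⊤ := by
    refine top_le_iff.mp (Submodule.le_of_le_smul_of_le_jacobson_bot Module.Finite.fg_top hJ ?_)
    rw [← hx]
    conv_lhs => rw [hx, ← hx]
    refine Submodule.span_le.mpr ?_
    rintro _ ⟨i, rfl⟩
    obtain ⟨c, hc⟩ := Ideal.Quotient.mk_surjective (s (x i))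
    have := h2 (x i) c hc.symm
    rw [hmap] at this
    have e : x i = (u (some i) + c • u none) + (η * x i - c • η) := by
      simp only [u, Option.elim]; ring
    rw [e]
    refine Submodule.add_mem_sup (add_mem (Submodule.subset_span ⟨_, rfl⟩)
      (Submodule.smul_mem _ _ (Submodule.subset_span ⟨_, rfl⟩))) ?_
    rw [hx]; exact this
  let d : Option (Fin n) → R := fun o => o.elim 1 (fun _ => 0)
  have hηη : η * η - η ∈ J.map (algebraMap R U) := by
    simpa using h2 η 1 (by simpa using h1)
  have hrow : ∀ j, ∃ a : Option (Fin n) → R, (∀ i, a i ∈ J) ∧ η * u j - d j • u j = ∑ i, a i • u i := by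
    intro j
    have : η * u j - d j • u j ∈ J • (⊤ : Submodule R U) := by
      rw [← hmap]
      cases j with
      | none => simpa [u, d] using hηη
      | some i =>
        simp only [u, d, Option.elim]
        have e : η * ((1 - η) * x i) - (0:R) • ((1 - η) * x i) = (η * η - η) * (- x i) := by
          rw [zero_smul]; ring
        rw [e]; exact Ideal.mul_mem_right _ _ hηη
    rw [← hspan, Submodule.mem_ideal_smul_span_iff_exists_sum] at this
    obtain ⟨a, ha, hs⟩ := this
    refine ⟨a, ha, ?_⟩
    rw [← hs, Finsupp.sum_fintype]; simp
  choose a haJ ha using hrow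
  let M : Matrix (Option (Fin n)) (Option (Fin n)) R := Matrix.diagonal d + Matrix.of a
  have hMmap : M.map (Ideal.Quotient.mk J) = Matrix.diagonal (fun o => Ideal.Quotient.mk J (d o)) := by
    ext i j
    simp only [M, Matrix.map_apply, Matrix.add_apply, Matrix.of_apply, map_add,
      Ideal.Quotient.eq_zero_iff_mem.mpr (haJ i j), add_zero, Matrix.diagonal_apply]
    split_ifs <;> simp
  refine ⟨M.charpoly, n, M.charpoly_monic, ?_, ?_⟩
  · let B := Matrix.scalar (Option (Fin n)) η - M.map (algebraMap R U)
    have hdet : aeval η M.charpoly = B.det := by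
      rw [← Matrix.eval_charpoly, Matrix.charpoly_map, eval_map_algebraMap]
    have hB : B.mulVec u = 0 := by
      ext j
      have e : (M.map (algebraMap R U)).mulVec u j = d j • u j + ∑ i, a j i • u i := by
        simp [Matrix.mulVec, dotProduct, M, Matrix.map_apply, Matrix.add_apply, add_mul,
          Finset.sum_add_distrib, Matrix.diagonal_apply, Algebra.smul_def, apply_ite]
      rw [Matrix.sub_mulVec, Pi.sub_apply, e, ← ha j, Matrix.scalar_apply, Matrix.mulVec_diagonal]
      simp
    have hz : ∀ j, B.det * u j = 0 := by
      intro j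
      have : (B.adjugate * B).mulVec u j = 0 := by
        rw [← Matrix.mulVec_mulVec, hB, Matrix.mulVec_zero]; rfl
      rw [Matrix.adjugate_mul, Matrix.smul_mulVec, Matrix.one_mulVec] at this
      simpa using this
    rw [hdet]
    have : ∀ z : U, B.det * z = 0 := by
      intro z
      have hz' : z ∈ Submodule.span R (Set.range u) := hspan ▸ Submodule.mem_top
      induction hz' using Submodule.span_induction with
      | mem y hy => obtain ⟨i, rfl⟩ := hy; exact hz i
      | zero => simp
      | add y z _ _ hy hz => rw [mul_add, hy, hz, add_zero]
      | smul k y _ hy => rw [mul_smul_comm, hy, smul_zero]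
    simpa using this 1
  · rw [← Matrix.charpoly_map, hMmap, Matrix.charpoly_diagonal, Fintype.prod_option]
    simp [d]

open Polynomial in
theorem aux_idem {R U : Type} [CommRing R] [CommRing U] [Algebra R U] [Module.Finite R U] (J : Ideal R)
    (hH : HenselianRing R J) (η : U)
    (s : U →ₐ[R] R ⧸ J) (h1 : s η = 1)
    (h2 : ∀ u c, s u = Ideal.Quotient.mk J c → η * u - c • η ∈ J.map (algebraMap R U)) :
    ∃ ε : U, ε * ε = ε ∧ s ε = 1 ∧ ∀ u, ∃ c : R, ε * u = c • ε := by
  have hJ := hH.jac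
  obtain ⟨F, N, hF, hF0, hFm⟩ := aux_poly J hJ η s h1 h2
  have hev : ∀ (G : R[X]) (a : R), Ideal.Quotient.mk J (G.eval a) =
      (G.map (Ideal.Quotient.mk J)).eval (Ideal.Quotient.mk J a) := fun G a => by
    rw [eval_map, eval₂_at_apply]
  have hd1 : (F.derivative.map (Ideal.Quotient.mk J)).eval 1 = 1 := by
    rw [← derivative_map, hFm]
    simp
  obtain ⟨θ, hθ, hθ1⟩ := hH.is_henselian F hF 1
    (by rw [← Ideal.Quotient.eq_zero_iff_mem, hev, hFm]; simp)
    (by rw [hev, map_one, hd1]; exact isUnit_one)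
  have hmkθ : Ideal.Quotient.mk J θ = 1 := by
    rw [← map_one (Ideal.Quotient.mk J)]; exact Ideal.Quotient.eq.mpr hθ1
  have hθu : IsUnit θ := aux_isUnit_of_mk hJ θ (by rw [hmkθ]; exact isUnit_one)
  obtain ⟨G, hG⟩ := dvd_iff_isRoot.mpr hθ
  have hGθ : G.eval θ = F.derivative.eval θ := by
    rw [hG]; simp
  have hGu1 : Ideal.Quotient.mk J (G.eval θ) = 1 := by
    rw [hGθ, hev, hmkθ, hd1]
  have hGu : IsUnit (G.eval θ) := aux_isUnit_of_mk hJ _ (by rw [hGu1]; exact isUnit_one)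
  set γ : U := aeval η G with hγ
  have hηγ : η * γ = θ • γ := by
    rw [hG, map_mul] at hF0
    simp only [map_sub, aeval_X, aeval_C] at hF0
    rw [Algebra.smul_def]; linear_combination hF0
  have hpoly : ∀ H : R[X], aeval η H * γ = (H.eval θ) • γ := by
    intro H
    induction H using Polynomial.induction_on' with
    | add p q hp hq => rw [map_add, add_mul, hp, hq, eval_add, add_smul]
    | monomial n a =>
      rw [aeval_monomial, eval_monomial]
      have : ∀ n : ℕ, η ^ n * γ = (θ ^ n) • γ := by
        intro n
        induction n with
        | zero => simp
        | succ n ih => rw [pow_succ, mul_assoc, hηγ, mul_smul_comm, ih, smul_smul]; congr 1; ring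
      rw [mul_assoc, this, mul_smul, Algebra.smul_def a]
  obtain ⟨v, hv⟩ := hGu.exists_left_inv
  have hvJ : Ideal.Quotient.mk J v = 1 := by
    have := congr(Ideal.Quotient.mk J $hv)
    rwa [map_mul, hGu1, mul_one, map_one] at this
  have hγγ : γ * γ = (G.eval θ) • γ := hpoly G
  have hsγ : s γ = 1 := by
    rw [hγ, ← aeval_algHom_apply, h1]
    have : aeval (1 : R ⧸ J) G = Ideal.Quotient.mk J (G.eval θ) := by
      rw [hev, hmkθ]
      exact (eval_map_algebraMap G (1 : R ⧸ J)).symm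
    rw [this, hGu1]
  refine ⟨v • γ, ?_, ?_, ?_⟩
  · rw [smul_mul_smul_comm, hγγ, smul_smul, mul_assoc, hv, mul_one]
  · rw [map_smul, hsγ, Algebra.smul_def, mul_one]; exact hvJ
  · set ε := v • γ with hε
    have hηε : η * ε = θ • ε := by rw [hε, mul_smul_comm, hηγ, smul_comm]
    let Nn : Submodule R U := (⊤ : Submodule R U).map (LinearMap.mulLeft R ε)
    have hNfg : Nn.FG := Module.Finite.fg_top.map _
    have hle : Nn ≤ Submodule.span R {ε} := by
      refine Submodule.le_of_le_smul_of_le_jacobson_bot hNfg hJ ?_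
      rintro _ ⟨u, -, rfl⟩
      obtain ⟨w, hw⟩ := hθu.exists_left_inv
      obtain ⟨c, hc⟩ := Ideal.Quotient.mk_surjective (s u)
      have h3 := h2 u c hc.symm
      have h4 : ε * (η * u - c • η) ∈ J • Nn := by
        have : η * u - c • η ∈ J • (⊤ : Submodule R U) := by
          rw [Ideal.smul_top_eq_map]; exact h3
        have := Submodule.mem_map_of_mem (f := LinearMap.mulLeft R ε) this
        rwa [Submodule.map_smul''] at this
      have h5 : ε * u = (w * c * θ) • ε + w • (ε * (η * u - c • η)) := by
        have hw' : algebraMap R U w * algebraMap R U θ = 1 := by rw [← map_mul, hw, map_one]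
        simp only [Algebra.smul_def, map_mul] at hηε ⊢
        linear_combination (-ε * u) * hw' + (- algebraMap R U w * u + algebraMap R U w * algebraMap R U c) * hηε
      rw [LinearMap.mulLeft_apply, h5]
      exact Submodule.add_mem_sup (Submodule.smul_mem _ _ (Submodule.mem_span_singleton_self _))
        (Submodule.smul_mem _ _ h4)
    intro u
    have := hle (Submodule.mem_map_of_mem (f := LinearMap.mulLeft R ε) (Submodule.mem_top (x := u)))
    obtain ⟨c, hc⟩ := Submodule.mem_span_singleton.mp this
    exact ⟨c, hc.symm⟩

theorem aux_section {R U : Type} [CommRing R] [CommRing U] [Algebra R U] [Module.Finite R U]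
    [Algebra.FinitePresentation R U] (J : Ideal R)
    (hH : HenselianRing R J) (r : U) [Algebra.Etale R (Localization.Away r)]
    (s : U →ₐ[R] R ⧸ J) (hs : IsUnit (s r)) :
    ∃ σ : U →ₐ[R] R, ∀ u, Ideal.Quotient.mk J (σ u) = s u := by
  have hJ := hH.jac
  obtain ⟨η, hη1, hη2⟩ := aux_eta J s (aux_ker_le J r s hs)
  obtain ⟨ε, hε, hsε, hεR⟩ := aux_idem J hH η s hη1 hη2
  let L : Ideal U := Ideal.span {1 - ε}
  let W := U ⧸ L
  let π : U →ₐ[R] W := Ideal.Quotient.mkₐ R L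
  have hπε : π ε = 1 := by
    have : π (1 - ε) = 0 := Ideal.Quotient.eq_zero_iff_mem.mpr (Ideal.mem_span_singleton_self _)
    rw [map_sub, map_one, sub_eq_zero] at this
    exact this.symm
  have hπu : ∀ u c, ε * u = c • ε → π u = algebraMap R W c := by
    intro u c h
    have := congr(π $h)
    rwa [map_mul, map_smul, hπε, one_mul, Algebra.smul_def, mul_one] at this
  have : Algebra.FinitePresentation R W :=
    Algebra.FinitePresentation.quotient ⟨{1 - ε}, by simp [L]⟩
  have hsurj : Function.Surjective (algebraMap R W) := by
    intro w
    obtain ⟨u, rfl⟩ := Ideal.Quotient.mk_surjective w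
    obtain ⟨c, hc⟩ := hεR u
    exact ⟨c, (hπu u c hc).symm⟩
  let sb : W →ₐ[R] R ⧸ J := Ideal.Quotient.liftₐ L s (by
    have : L ≤ RingHom.ker s := by
      rw [Ideal.span_le, Set.singleton_subset_iff, SetLike.mem_coe, RingHom.mem_ker]
      rw [map_sub, map_one, hsε, sub_self]
    exact fun a ha => this ha)
  have hsb : ∀ u, sb (π u) = s u := fun u => rfl
  have hsbR : ∀ c : R, sb (algebraMap R W c) = Ideal.Quotient.mk J c := fun c => sb.commutes c
  let 𝔞 : Ideal R := RingHom.ker (algebraMap R W)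
  have h𝔞fg : 𝔞.FG := Algebra.FinitePresentation.ker_fG_of_surjective (Algebra.ofId R W) hsurj
  have h𝔞J : 𝔞 ≤ J := by
    intro a ha
    rw [← Ideal.Quotient.eq_zero_iff_mem, ← hsbR, RingHom.mem_ker.mp ha, map_zero]
  have h𝔞ε : ∀ a ∈ 𝔞, a • ε = 0 := by
    intro a ha
    have h1 : π (algebraMap R U a) = 0 := by
      rw [AlgHom.commutes]; exact ha
    obtain ⟨w, hw⟩ := Ideal.mem_span_singleton'.mp (Ideal.Quotient.eq_zero_iff_mem.mp h1)
    rw [Algebra.smul_def, ← hw]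
    linear_combination (-w) * hε
  have hru : IsUnit (π r) := by
    obtain ⟨c, hc⟩ := hεR r
    have := hπu r c hc
    rw [this]
    refine IsUnit.map _ (aux_isUnit_of_mk hJ c ?_)
    rw [← hsbR, ← this, hsb]; exact hs
  let φ : Localization.Away r →ₐ[R] W := IsLocalization.Away.liftAlgHom r hru
  have hφ : ∀ u, φ (algebraMap U _ u) = π u := fun u => by
    simp [φ, IsLocalization.Away.liftAlgHom_apply]
  let g : R ⧸ (𝔞 ^ 2) →ₐ[R] W := Ideal.Quotient.liftₐ (𝔞 ^ 2) (Algebra.ofId R W)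
    (fun a ha => Ideal.pow_le_self two_ne_zero ha)
  have hg : ∀ c, g (Ideal.Quotient.mk _ c) = algebraMap R W c := fun c => rfl
  have hgs : Function.Surjective g := fun w => by
    obtain ⟨c, rfl⟩ := hsurj w
    exact ⟨_, hg c⟩
  have hkerg : (RingHom.ker g) = 𝔞.map (Ideal.Quotient.mk (𝔞 ^ 2)) := by
    ext x
    obtain ⟨c, rfl⟩ := Ideal.Quotient.mk_surjective x
    rw [RingHom.mem_ker, hg]
    constructor
    · intro h; exact Ideal.mem_map_of_mem _ h
    · intro h
      rw [Ideal.mem_map_iff_of_surjective _ Ideal.Quotient.mk_surjective] at h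
      obtain ⟨v, hv, hv'⟩ := h
      rw [← hg, ← hv', hg]; exact hv
  have hnil : IsNilpotent (RingHom.ker g) := ⟨2, by
    rw [hkerg, ← Ideal.map_pow, Ideal.map_quotient_self]; rfl⟩
  let ψ := Algebra.FormallySmooth.liftOfSurjective φ g hgs hnil
  have hψ : ∀ x, g (ψ x) = φ x := Algebra.FormallySmooth.liftOfSurjective_apply φ g hgs hnil
  let e := ψ (algebraMap U _ ε)
  have he : e * e = e := by rw [← map_mul, ← map_mul, hε]
  have hge : g e = 1 := by rw [hψ, hφ, hπε]
  have he1 : e = 1 := by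
    have h1 : (1 - e) ∈ RingHom.ker g := by
      rw [RingHom.mem_ker, map_sub, map_one, hge, sub_self]
    have h2 : (1 - e) ^ 2 ∈ (RingHom.ker g) ^ 2 := Ideal.pow_mem_pow h1 2
    rw [hkerg, ← Ideal.map_pow, Ideal.map_quotient_self] at h2
    have h3 : (1 - e) ^ 2 = 0 := h2
    linear_combination he - h3
  have h𝔞2 : 𝔞 ≤ 𝔞 • 𝔞 := by
    intro a ha
    have h1 : ψ (algebraMap U _ (a • ε)) = a • e := by
      rw [show algebraMap U (Localization.Away r) (a • ε) = a • algebraMap U _ ε from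
        map_smul (IsScalarTower.toAlgHom R U (Localization.Away r)) a ε, map_smul]
    rw [h𝔞ε a ha, map_zero, map_zero, he1, Algebra.smul_def, mul_one] at h1
    have := Ideal.Quotient.eq_zero_iff_mem.mp h1.symm
    rwa [pow_two] at this
  have h𝔞0 : 𝔞 = ⊥ := Submodule.eq_bot_of_le_smul_of_le_jacobson_bot 𝔞 𝔞 h𝔞fg h𝔞2 (h𝔞J.trans hJ)
  let E : R ≃ₐ[R] W := AlgEquiv.ofBijective (Algebra.ofId R W)
    ⟨(RingHom.injective_iff_ker_eq_bot (algebraMap R W)).mpr h𝔞0, hsurj⟩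
  refine ⟨E.symm.toAlgHom.comp π, fun u => ?_⟩
  rw [← hsb u, ← hsbR]
  congr 1
  exact E.apply_symm_apply (π u)

open Polynomial in
theorem aux_factor {R : Type} [CommRing R] (J : Ideal R) (hH : HenselianRing R J) (m k : ℕ)
    (p : MonicDegreeEq R (m + k)) (g₀ : MonicDegreeEq (R ⧸ J) m) (h₀ : MonicDegreeEq (R ⧸ J) k)
    (hmul : g₀.1 * h₀.1 = p.1.map (Ideal.Quotient.mk J)) (hcop : IsCoprime g₀.1 h₀.1) :
    ∃ g h : R[X], g * h = p.1 ∧ IsCoprime g h ∧ g.map (Ideal.Quotient.mk J) = g₀.1 ∧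
      h.map (Ideal.Quotient.mk J) = h₀.1 := by
  have hJ := hH.jac
  let s' := (UniversalCoprimeFactorizationRing.homEquiv (R ⧸ J) m k rfl p).symm
    ⟨(g₀, h₀), hmul, hcop⟩
  let Δ := (UniversalFactorizationRing.presentation m k rfl p).jacobian
  let s : UniversalFactorizationRing m k rfl p →ₐ[R] R ⧸ J :=
    s'.comp (IsScalarTower.toAlgHom R _ _)
  have hΔ : IsUnit (s Δ) := (IsLocalization.Away.algebraMap_isUnit Δ).map s'
  have : Algebra.Etale R (Localization.Away Δ) :=
    inferInstanceAs (Algebra.Etale R (UniversalCoprimeFactorizationRing m k rfl p))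
  obtain ⟨σ, hσ⟩ := aux_section J hH Δ s hΔ
  have hσΔ : IsUnit (σ Δ) := aux_isUnit_of_mk hJ _ (by rw [hσ]; exact hΔ)
  let σ' : UniversalCoprimeFactorizationRing m k rfl p →ₐ[R] R :=
    IsLocalization.Away.liftAlgHom Δ hσΔ
  let q := UniversalCoprimeFactorizationRing.homEquiv R m k rfl p σ'
  have hcomp : (Ideal.Quotient.mkₐ R J).comp σ' = s' := by
    refine IsLocalization.algHom_ext (Submonoid.powers Δ) ?_
    ext u
    change Ideal.Quotient.mk J (σ' (algebraMap _ _ u)) = s' (algebraMap _ _ u)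
    have : σ' (algebraMap _ _ u) = σ u := by
      simp [σ', IsLocalization.Away.liftAlgHom_apply]
    rw [this, hσ]; rfl
  have hs' : UniversalCoprimeFactorizationRing.homEquiv (R ⧸ J) m k rfl p s' =
    ⟨(g₀, h₀), hmul, hcop⟩ := Equiv.apply_symm_apply _ _
  refine ⟨q.1.1.1, q.1.2.1, ?_, q.2.2, ?_, ?_⟩
  · have := q.2.1
    rw [this]; exact Polynomial.map_id
  · have := UniversalCoprimeFactorizationRing.homEquiv_comp_fst R m k rfl p σ'
      (Ideal.Quotient.mkₐ R J)
    rw [hcomp, hs'] at this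
    exact (congr(($this).1)).symm
  · have := UniversalCoprimeFactorizationRing.homEquiv_comp_snd R m k rfl p σ'
      (Ideal.Quotient.mkₐ R J)
    rw [hcomp, hs'] at this
    exact (congr(($this).1)).symm

open Polynomial in
/-- For a matrix `d` with entries in `J` there is a polynomial `F` such that
`F` is idempotent on anything with `E ^ 2 - E = d`. -/
theorem aux_F {R : Type} [CommRing R] (J : Ideal R) (hH : HenselianRing R J) (n : ℕ)
    (d : Matrix (Fin n) (Fin n) R) (hd : ∀ i j, d i j ∈ J) :
    ∃ F : R[X], F.eval 0 ∈ J ∧ F.eval 1 - 1 ∈ J ∧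
      d.charpoly.comp (X ^ 2 - X) ∣ F * F - F := by
  nontriviality R
  have hJ := hH.jac
  have hJ1 : J ≠ ⊤ := by
    rintro rfl
    have : (⊥ : Ideal R).jacobson = ⊤ := top_le_iff.mp hJ
    rw [Ideal.jacobson_eq_top_iff] at this
    exact bot_ne_top this
  have : Nontrivial (R ⧸ J) := Ideal.Quotient.nontrivial_iff.mpr hJ1
  have hq : (X ^ 2 - X : R[X]).Monic := by
    have := monic_X_pow_add (R := R) (p := -X) (n := 2) (by
      rw [degree_neg, degree_X]; norm_num)
    rwa [← sub_eq_add_neg] at this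
  have hqd : (X ^ 2 - X : R[X]).natDegree = 2 := by
    compute_degree!
  have hpm : (d.charpoly.comp (X ^ 2 - X)).Monic := d.charpoly_monic.comp hq (by rw [hqd]; norm_num)
  have hpd : (d.charpoly.comp (X ^ 2 - X)).natDegree = n + n := by
    rw [natDegree_comp_eq_of_mul_ne_zero, hqd, Matrix.charpoly_natDegree_eq_dim, Fintype.card_fin, mul_two]
    rw [hq.leadingCoeff, d.charpoly_monic.leadingCoeff]; simp
  have hdm : d.charpoly.map (Ideal.Quotient.mk J) = X ^ n := by
    rw [← Matrix.charpoly_map]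
    have : d.map (Ideal.Quotient.mk J) = Matrix.diagonal (fun _ => 0) := by
      ext i j
      simp [Matrix.map_apply, Ideal.Quotient.eq_zero_iff_mem.mpr (hd i j)]
    rw [this, Matrix.charpoly_diagonal]; simp
  obtain ⟨g, h, hgh, ⟨u, v, huv⟩, hg, hh⟩ := aux_factor J hH n n (MonicDegreeEq.mk _ hpm hpd)
    (MonicDegreeEq.mk (X ^ n) (monic_X_pow n) (natDegree_X_pow n))
    (MonicDegreeEq.mk ((X - C 1) ^ n) ((monic_X_sub_C 1).pow n)
      (by rw [(monic_X_sub_C _).natDegree_pow, natDegree_X_sub_C, mul_one]))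
    (by
      change X ^ n * (X - C 1) ^ n = (d.charpoly.comp (X ^ 2 - X)).map (Ideal.Quotient.mk J)
      rw [Polynomial.map_comp, hdm]
      simp only [Polynomial.map_sub, Polynomial.map_pow, map_X, pow_comp, X_comp]
      rw [← mul_pow]; congr 1; simp; ring)
    (by
      change IsCoprime (X ^ n) ((X - C 1) ^ n)
      refine IsCoprime.pow ⟨1, -1, ?_⟩
      simp only [map_one]; ring)
  change g * h = d.charpoly.comp (X ^ 2 - X) at hgh
  change g.map _ = X ^ n at hg
  change h.map _ = (X - C 1) ^ n at hh
  have hev : ∀ (G : R[X]) (a : R), Ideal.Quotient.mk J (G.eval a) =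
      (G.map (Ideal.Quotient.mk J)).eval (Ideal.Quotient.mk J a) := fun G a => by
    rw [eval_map, eval₂_at_apply]
  rcases Nat.eq_zero_or_pos n with rfl | hn
  · refine ⟨X, by simp, by simp, ?_⟩
    have : d.charpoly = 1 := Matrix.charpoly_isEmpty
    rw [this, one_comp]; exact one_dvd _
  refine ⟨u * g, ?_, ?_, ?_⟩
  · rw [eval_mul]
    refine Ideal.mul_mem_left _ _ ?_
    rw [← Ideal.Quotient.eq_zero_iff_mem, hev, hg]; simp [hn.ne']
  · have : (u * g).eval 1 - 1 = -(v.eval 1 * h.eval 1) := by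
      have := congr(eval 1 $huv)
      rw [eval_add, eval_mul, eval_mul, eval_one] at this
      rw [eval_mul]; linear_combination this
    rw [this]
    refine neg_mem (Ideal.mul_mem_left _ _ ?_)
    rw [← Ideal.Quotient.eq_zero_iff_mem, hev, hh]; simp [hn.ne']
  · refine ⟨- (u * v), ?_⟩
    rw [← hgh]; linear_combination (u * g) * huv

section NC
open Polynomial

theorem aux_nc {R Λ : Type} [CommRing R] [Ring Λ] [Algebra R Λ] (M : Submodule R Λ)
    (hmul : ∀ x ∈ M, ∀ y ∈ M, x * y ∈ M) (hunit : ∀ x ∈ M, IsUnit (1 + x))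
    (E δ : Λ) (hE : E * E = E) (h1 : δ ∈ M) (h2 : E * δ ∈ M) (h3 : δ * E ∈ M) (h4 : E * δ * E ∈ M)
    (F : R[X]) (ha : IsUnit (1 - F.eval 0)) (hc : IsUnit (F.eval 1)) :
    IsUnit (aeval (E + δ) F * E + (1 - aeval (E + δ) F) * (1 - E)) := by
  let b : Submodule R Λ :=
    { carrier := {x | x ∈ M ∧ E * x ∈ M ∧ x * E ∈ M ∧ E * x * E ∈ M}
      zero_mem' := by simp
      add_mem' := by
        rintro x y ⟨a1, a2, a3, a4⟩ ⟨b1, b2, b3, b4⟩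
        refine ⟨add_mem a1 b1, ?_, ?_, ?_⟩
        · rw [mul_add]; exact add_mem a2 b2
        · rw [add_mul]; exact add_mem a3 b3
        · rw [mul_add, add_mul]; exact add_mem a4 b4
      smul_mem' := by
        rintro r x ⟨a1, a2, a3, a4⟩
        refine ⟨M.smul_mem r a1, ?_, ?_, ?_⟩
        · rw [mul_smul_comm]; exact M.smul_mem r a2
        · rw [smul_mul_assoc]; exact M.smul_mem r a3
        · rw [mul_smul_comm, smul_mul_assoc]; exact M.smul_mem r a4 }
  have hbM : ∀ x ∈ b, x ∈ M := fun x hx => hx.1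
  have hEb : ∀ x ∈ b, E * x ∈ b := by
    rintro x ⟨a1, a2, a3, a4⟩
    refine ⟨a2, ?_, a4, ?_⟩
    · rw [← mul_assoc, hE]; exact a2
    · rw [← mul_assoc, hE]; exact a4
  have hbE : ∀ x ∈ b, x * E ∈ b := by
    rintro x ⟨a1, a2, a3, a4⟩
    refine ⟨a3, ?_, ?_, ?_⟩
    · rw [← mul_assoc]; exact a4
    · rw [mul_assoc, hE]; exact a3
    · rw [mul_assoc, mul_assoc, hE, ← mul_assoc]; exact a4
  have hbb : ∀ x ∈ b, ∀ y ∈ b, x * y ∈ b := by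
    rintro x ⟨a1, a2, a3, a4⟩ y ⟨b1, b2, b3, b4⟩
    refine ⟨hmul _ a1 _ b1, ?_, ?_, ?_⟩
    · rw [← mul_assoc]; exact hmul _ a2 _ b1
    · rw [mul_assoc]; exact hmul _ a1 _ b3
    · rw [← mul_assoc, mul_assoc]; exact hmul _ a2 _ b3
  have hδ : δ ∈ b := ⟨h1, h2, h3, h4⟩
  have hpow : ∀ n : ℕ, E ^ (n + 1) = E := by
    intro n
    induction n with
    | zero => simp
    | succ n ih => rw [pow_succ, ih, hE]
  have hpowδ : ∀ n : ℕ, (E + δ) ^ (n + 1) - E ∈ b := by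
    intro n
    induction n with
    | zero => simpa using hδ
    | succ n ih =>
      have : (E + δ) ^ (n + 1 + 1) - E = ((E + δ) ^ (n + 1) - E) * E + ((E + δ) ^ (n + 1) - E) * δ
          + E * δ := by
        rw [pow_succ _ (n + 1)]
        generalize (E + δ) ^ (n + 1) = z
        nth_rewrite 2 [← hE]
        noncomm_ring
      rw [this]
      exact add_mem (add_mem (hbE _ ih) (hbb _ ih _ hδ)) (hEb _ hδ)
  have hF : ∀ F : R[X], aeval (E + δ) F - (F.eval 0 • (1 - E) + F.eval 1 • E) ∈ b := by
    intro F
    induction F using Polynomial.induction_on' with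
    | add p q hp hq =>
      have : aeval (E + δ) (p + q) - ((p + q).eval 0 • (1 - E) + (p + q).eval 1 • E) =
        (aeval (E + δ) p - (p.eval 0 • (1 - E) + p.eval 1 • E)) +
        (aeval (E + δ) q - (q.eval 0 • (1 - E) + q.eval 1 • E)) := by
        simp only [map_add, eval_add, add_smul]; abel
      rw [this]; exact add_mem hp hq
    | monomial n a =>
      rw [aeval_monomial, eval_monomial, eval_monomial, one_pow, mul_one, ← Algebra.smul_def]
      cases n with
      | zero =>
        simp only [pow_zero, mul_one]
        rw [← smul_add, sub_add_cancel, sub_self]; exact b.zero_mem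
      | succ n =>
        rw [zero_pow (Nat.succ_ne_zero n), mul_zero, zero_smul, zero_add, ← smul_sub]
        exact b.smul_mem a (hpowδ n)
  set e := aeval (E + δ) F with he
  set a := F.eval 0
  set c := F.eval 1
  obtain ⟨β, hβ⟩ : ∃ β, β = e - (a • (1 - E) + c • E) := ⟨_, rfl⟩
  have hβb : β ∈ b := hβ ▸ hF F
  obtain ⟨a', ha', ha''⟩ := isUnit_iff_exists.mp ha
  obtain ⟨c', hc', hc''⟩ := isUnit_iff_exists.mp hc
  have hEc : E * (1 - E) = 0 := by rw [mul_sub, hE, mul_one, sub_self]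
  have hcE : (1 - E) * E = 0 := by rw [sub_mul, hE, one_mul, sub_self]
  have hcc : (1 - E) * (1 - E) = 1 - E := by rw [mul_sub, hcE, mul_one, sub_zero]
  let v : Λ := c • E + (1 - a) • (1 - E)
  let w : Λ := c' • E + a' • (1 - E)
  have hprod : ∀ x y z u : R, (x • E + y • (1 - E)) * (z • E + u • (1 - E)) =
      (x * z) • E + (y * u) • (1 - E) := by
    intro x y z u
    simp only [add_mul, mul_add, smul_mul_smul_comm, hE, hEc, hcE, hcc, smul_zero, add_zero, zero_add]
  have hvw : v * w = 1 := by
    rw [hprod, hc', ha', one_smul, one_smul]; abel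
  have hwv : w * v = 1 := by
    rw [hprod, hc'', ha'', one_smul, one_smul]; abel
  have hv : IsUnit v := isUnit_iff_exists.mpr ⟨w, hvw, hwv⟩
  let β' : Λ := β * E + (β * E - β)
  have hβ' : β' ∈ b := add_mem (hbE _ hβb) (sub_mem (hbE _ hβb) hβb)
  have hwβ : w * β' ∈ b := by
    have : w * β' = c' • (E * β') + a' • (β' - E * β') := by
      simp only [w, add_mul, smul_mul_assoc, sub_mul, one_mul]
    rw [this]
    exact add_mem (b.smul_mem _ (hEb _ hβ')) (b.smul_mem _ (sub_mem hβ' (hEb _ hβ')))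
  have hu : e * E + (1 - e) * (1 - E) = v * (1 + w * β') := by
    rw [mul_add, mul_one, ← mul_assoc, hvw, one_mul]
    have hee : e = (a • (1 - E) + c • E) + β := by rw [hβ]; abel
    have t1 : (a • (1 - E) + c • E) * E = c • E := by
      rw [add_mul, smul_mul_assoc, smul_mul_assoc, hcE, hE, smul_zero, zero_add]
    have t2 : (a • (1 - E) + c • E) * (1 - E) = a • (1 - E) := by
      rw [add_mul, smul_mul_assoc, smul_mul_assoc, hcc, hEc, smul_zero, add_zero]
    rw [sub_mul, one_mul, hee, add_mul _ β E, add_mul _ β (1 - E), t1, t2]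
    simp only [v, β', sub_smul, one_smul, mul_sub, mul_one]
    abel
  rw [hu]
  exact hv.mul (hunit _ (hbM _ hwβ))
end NC

section Abs
open Polynomial

variable {R A B : Type} [CommRing R] [CommRing A] [CommRing B] [Algebra R A] [Algebra A B]
  [Algebra R B] [IsScalarTower R A B]

theorem aux_unit_A {J : Ideal R} (hJ : J ≤ Ideal.jacobson ⊥) {n : ℕ} (D : Matrix (Fin n) (Fin n) A)
    (hD : ∀ i j, ∃ r ∈ J, algebraMap R A r = D i j) : IsUnit (1 + D) := by
  choose D₀ hD₀ h using hD
  have h1 : IsUnit (1 + Matrix.of D₀).det := by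
    refine aux_isUnit_of_mk hJ _ ?_
    rw [RingHom.map_det]
    have : (Ideal.Quotient.mk J).mapMatrix (1 + Matrix.of D₀) = 1 := by
      rw [map_add, map_one]
      convert add_zero _
      ext i j
      simp [Ideal.Quotient.eq_zero_iff_mem.mpr (hD₀ i j)]
    rw [this, Matrix.det_one]; exact isUnit_one
  have h2 : 1 + D = (algebraMap R A).mapMatrix (1 + Matrix.of D₀) := by
    rw [map_add, map_one]
    congr 1
    ext i j
    simp [h]
  rw [h2]
  exact ((Matrix.isUnit_iff_isUnit_det _).mpr h1).map _

/-- The abstract approximation hypotheses. -/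
structure AuxSys (J : Ideal R) (G : ℕ → Submodule R B) (A : Type) [CommRing A] [Algebra R A]
    [Algebra A B] : Prop where
  dense : ∀ (b : B) (m : ℕ), ∃ a : A, algebraMap A B a - b ∈ G m
  bdd : ∀ b : B, ∃ k, ∀ x ∈ G k, b * x ∈ G 0
  isOpn : ∀ a : A, algebraMap A B a ∈ G 0 → ∃ r ∈ J, algebraMap R A r = a
  unit : ∀ (n : ℕ) (D : Matrix (Fin n) (Fin n) B), (∀ i j, D i j ∈ G 0) → IsUnit (1 + D)
  mul : ∀ x ∈ G 0, ∀ y ∈ G 0, x * y ∈ G 0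
  anti : Antitone G

theorem AuxSys.exists_bd {J : Ideal R} {G : ℕ → Submodule R B} (h : AuxSys J G A)
    {a b c d : ℕ} (L : Matrix (Fin a) (Fin b) B) (M : Matrix (Fin c) (Fin d) B) :
    ∃ k, ∀ D : Matrix (Fin b) (Fin c) B, (∀ i j, D i j ∈ G k) → ∀ i j, (L * D * M) i j ∈ G 0 := by
  choose f hf using h.bdd
  let k := Finset.univ.sup fun x : (Fin a × Fin b) × (Fin c × Fin d) => f (L x.1.1 x.1.2 * M x.2.1 x.2.2)
  refine ⟨k, fun D hD i j => ?_⟩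
  rw [Matrix.mul_apply]
  refine Submodule.sum_mem _ fun y _ => ?_
  rw [Matrix.mul_apply, Finset.sum_mul]
  refine Submodule.sum_mem _ fun x _ => ?_
  rw [mul_right_comm]
  refine hf _ _ (h.anti ?_ (hD x y))
  exact Finset.le_sup (f := fun x : (Fin a × Fin b) × (Fin c × Fin d) => f (L x.1.1 x.1.2 * M x.2.1 x.2.2))
    (Finset.mem_univ ((i, x), (y, j)))

theorem AuxSys.exists_approx {J : Ideal R} {G : ℕ → Submodule R B} (h : AuxSys J G A)
    {a b : ℕ} (L : Matrix (Fin a) (Fin b) B) (k : ℕ) :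
    ∃ L₀ : Matrix (Fin a) (Fin b) A, ∀ i j, (L₀.map (algebraMap A B) - L) i j ∈ G k := by
  choose f hf using fun i j => h.dense (L i j) k
  exact ⟨Matrix.of f, fun i j => by simpa using hf i j⟩

theorem AuxSys.idem {J : Ideal R} (hH : HenselianRing R J) {G : ℕ → Submodule R B}
    (h : AuxSys J G A) {n : ℕ} (E : Matrix (Fin n) (Fin n) B) (hE : E * E = E) :
    ∃ (e : Matrix (Fin n) (Fin n) A) (u : Matrix (Fin n) (Fin n) B), e * e = e ∧ IsUnit u ∧
      e.map (algebraMap A B) * u = u * E := by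
  have hJ := hH.jac
  obtain ⟨k1, hk1⟩ := h.exists_bd (1 : Matrix (Fin n) (Fin n) B) (1 : Matrix (Fin n) (Fin n) B)
  obtain ⟨k2, hk2⟩ := h.exists_bd E (1 : Matrix (Fin n) (Fin n) B)
  obtain ⟨k3, hk3⟩ := h.exists_bd (1 : Matrix (Fin n) (Fin n) B) E
  obtain ⟨k4, hk4⟩ := h.exists_bd E E
  obtain ⟨E₀, hE₀⟩ := h.exists_approx E (max (max k1 k2) (max k3 k4))
  set δ := E₀.map (algebraMap A B) - E with hδ
  let M : Submodule R (Matrix (Fin n) (Fin n) B) :=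
    { carrier := {D | ∀ i j, D i j ∈ G 0}
      zero_mem' := fun i j => (G 0).zero_mem
      add_mem' := fun hx hy i j => (G 0).add_mem (hx i j) (hy i j)
      smul_mem' := fun r x hx i j => (G 0).smul_mem r (hx i j) }
  have hM : ∀ x ∈ M, ∀ y ∈ M, x * y ∈ M := fun x hx y hy i j => by
    rw [Matrix.mul_apply]
    exact Submodule.sum_mem _ fun z _ => h.mul _ (hx i z) _ (hy z j)
  have hMu : ∀ x ∈ M, IsUnit (1 + x) := fun x hx => h.unit n x hx
  have h1 : δ ∈ M := by
    have := hk1 δ (fun i j => h.anti (by simp) (hE₀ i j))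
    rw [one_mul, mul_one] at this; exact this
  have h2 : E * δ ∈ M := by
    have := hk2 δ (fun i j => h.anti (by simp) (hE₀ i j))
    rw [mul_one] at this; exact this
  have h3 : δ * E ∈ M := by
    have := hk3 δ (fun i j => h.anti (by simp) (hE₀ i j))
    rw [one_mul] at this; exact this
  have h4 : E * δ * E ∈ M := hk4 δ (fun i j => h.anti (by simp) (hE₀ i j))
  have hEδ : E₀.map (algebraMap A B) = E + δ := by rw [hδ]; abel
  have hd : (E₀ * E₀ - E₀).map (algebraMap A B) ∈ M := by
    have : (E₀ * E₀ - E₀).map (algebraMap A B) = E * δ + δ * E + δ * δ - δ := by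
      rw [Matrix.map_sub _ (map_sub _), Matrix.map_mul, hEδ]
      simp only [mul_add, add_mul, hE]; abel
    rw [this]
    exact sub_mem (add_mem (add_mem h2 h3) (hM _ h1 _ h1)) h1
  choose d hdJ hdd using fun i j => h.isOpn ((E₀ * E₀ - E₀) i j) (hd i j)
  obtain ⟨F, hF0, hF1, hFd⟩ := aux_F J hH n (Matrix.of d) hdJ
  have hdm : (Matrix.of d).map (algebraMap R A) = E₀ ^ 2 - E₀ := by
    ext i j
    simp [hdd, pow_two]
  have hz : aeval E₀ ((Matrix.of d).charpoly.comp (X ^ 2 - X)) = 0 := by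
    rw [aeval_comp]
    simp only [map_sub, map_pow, aeval_X]
    rw [← hdm, ← aeval_map_algebraMap A, ← Matrix.charpoly_map]
    exact Matrix.aeval_self_charpoly _
  refine ⟨aeval E₀ F, aeval (E + δ) F * E + (1 - aeval (E + δ) F) * (1 - E), ?_, ?_, ?_⟩
  · obtain ⟨c, hc⟩ := hFd
    have := congr(aeval E₀ $hc)
    rw [map_mul, hz, zero_mul, map_sub, map_mul, sub_eq_zero] at this
    exact this
  · refine aux_nc M hM hMu E δ hE h1 h2 h3 h4 F (aux_isUnit_of_mk hJ _ ?_) (aux_isUnit_of_mk hJ _ ?_)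
    · rw [map_sub, Ideal.Quotient.eq_zero_iff_mem.mpr hF0]; simp
    · rw [Ideal.Quotient.eq.mpr hF1]; simp
  · have he : (aeval E₀ F).map (algebraMap A B) = aeval (E + δ) F := by
      rw [← hEδ]
      exact (aeval_algHom_apply ((IsScalarTower.toAlgHom R A B).mapMatrix) E₀ F).symm
    have hee : aeval (E + δ) F * aeval (E + δ) F = aeval (E + δ) F := by
      obtain ⟨c, hc⟩ := hFd
      have := congr(aeval E₀ $hc)
      rw [map_mul, hz, zero_mul, map_sub, map_mul, sub_eq_zero] at this
      rw [← he, ← Matrix.map_mul, this]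
    rw [he]
    generalize aeval (E + δ) F = e at *
    simp only [mul_add, add_mul, mul_sub, sub_mul, mul_one, one_mul, ← mul_assoc, hee]
    simp only [mul_assoc, hE]
    abel

theorem AuxSys.iso {J : Ideal R} (hJ : J ≤ Ideal.jacobson ⊥) {G : ℕ → Submodule R B}
    (h : AuxSys J G A) {n m : ℕ} (e : Matrix (Fin n) (Fin n) A) (e' : Matrix (Fin m) (Fin m) A)
    (X : Matrix (Fin m) (Fin n) B) (Y : Matrix (Fin n) (Fin m) B)
    (h1 : e.map (algebraMap A B) * Y * e'.map (algebraMap A B) * X * e.map (algebraMap A B) =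
      e.map (algebraMap A B))
    (h2 : e'.map (algebraMap A B) * X * e.map (algebraMap A B) * Y * e'.map (algebraMap A B) =
      e'.map (algebraMap A B)) :
    ∃ (X₀ : Matrix (Fin m) (Fin n) A) (Y₀ : Matrix (Fin n) (Fin m) A),
      IsUnit (1 + (e * Y₀ * e' * X₀ * e - e)) ∧ IsUnit (1 + (e' * X₀ * e * Y₀ * e' - e')) := by
  set f := e.map (algebraMap A B) with hf
  set f' := e'.map (algebraMap A B) with hf'
  obtain ⟨k1, hk1⟩ := h.exists_bd f (f' * X * f)
  obtain ⟨k2, hk2⟩ := h.exists_bd (f' * X * f) f'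
  obtain ⟨Y₀, hY⟩ := h.exists_approx Y (max k1 k2)
  obtain ⟨k3, hk3⟩ := h.exists_bd (f * Y₀.map (algebraMap A B) * f') f
  obtain ⟨k4, hk4⟩ := h.exists_bd f' (f * Y₀.map (algebraMap A B) * f')
  obtain ⟨X₀, hX⟩ := h.exists_approx X (max k3 k4)
  have a1 := hk1 _ (fun i j => h.anti (by simp) (hY i j))
  have a2 := hk2 _ (fun i j => h.anti (by simp) (hY i j))
  have a3 := hk3 _ (fun i j => h.anti (by simp) (hX i j))
  have a4 := hk4 _ (fun i j => h.anti (by simp) (hX i j))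
  refine ⟨X₀, Y₀, aux_unit_A hJ _ fun i j => h.isOpn _ ?_, aux_unit_A hJ _ fun i j => h.isOpn _ ?_⟩
  · have : (e * Y₀ * e' * X₀ * e - e).map (algebraMap A B) =
        f * (Y₀.map (algebraMap A B) - Y) * (f' * X * f) +
        f * Y₀.map (algebraMap A B) * f' * (X₀.map (algebraMap A B) - X) * f := by
      rw [Matrix.map_sub _ (map_sub _)]
      simp only [Matrix.map_mul, ← hf, ← hf']
      nth_rewrite 3 [← h1]
      simp only [Matrix.mul_sub, Matrix.sub_mul, Matrix.mul_assoc]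
      abel
    change (e * Y₀ * e' * X₀ * e - e).map (algebraMap A B) i j ∈ _
    rw [this]
    exact add_mem (a1 i j) (a3 i j)
  · have : (e' * X₀ * e * Y₀ * e' - e').map (algebraMap A B) =
        f' * (X₀.map (algebraMap A B) - X) * (f * Y₀.map (algebraMap A B) * f') +
        f' * X * f * (Y₀.map (algebraMap A B) - Y) * f' := by
      rw [Matrix.map_sub _ (map_sub _)]
      simp only [Matrix.map_mul, ← hf, ← hf']
      nth_rewrite 3 [← h2]
      simp only [Matrix.mul_sub, Matrix.sub_mul, Matrix.mul_assoc]
      abel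
    change (e' * X₀ * e * Y₀ * e' - e').map (algebraMap A B) i j ∈ _
    rw [this]
    exact add_mem (a4 i j) (a2 i j)
end Abs

section Mods
open TensorProduct

variable {R A B : Type} [CommRing R] [CommRing A] [CommRing B] [Algebra R A] [Algebra A B]
  [Algebra R B] [IsScalarTower R A B]

theorem aux_bc {P : Type} [AddCommGroup P] [Module A P] {n : ℕ} (i : P →ₗ[A] (Fin n → A))
    (p : (Fin n → A) →ₗ[A] P) (h : p ∘ₗ i = LinearMap.id) :
    ∃ (iB : B ⊗[A] P →ₗ[B] (Fin n → B)) (pB : (Fin n → B) →ₗ[B] B ⊗[A] P),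
      (∀ x, pB (iB x) = x) ∧
      LinearMap.toMatrix' (iB ∘ₗ pB) = (LinearMap.toMatrix' (i ∘ₗ p)).map (algebraMap A B) := by
  let σ := TensorProduct.piScalarRight A B B (Fin n)
  refine ⟨σ.toLinearMap ∘ₗ i.baseChange B, p.baseChange B ∘ₗ σ.symm.toLinearMap, ?_, ?_⟩
  · intro x
    simp only [LinearMap.comp_apply, LinearEquiv.coe_coe, LinearEquiv.symm_apply_apply]
    rw [← LinearMap.comp_apply, ← LinearMap.baseChange_comp, h, LinearMap.baseChange_id]
    rfl
  · ext j k
    have h1 : σ.symm (Pi.single k 1) = (1 : B) ⊗ₜ[A] (Pi.single k 1 : Fin n → A) := by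
      rw [LinearEquiv.symm_apply_eq]
      ext l
      simp [σ, Pi.single_apply]
    rw [Matrix.map_apply, LinearMap.toMatrix'_apply, LinearMap.toMatrix'_apply]
    simp only [LinearMap.comp_apply, LinearEquiv.coe_coe, h1, LinearMap.baseChange_tmul]
    simp [σ, Algebra.smul_def]

theorem aux_bij {P : Type} [AddCommGroup P] [Module A P] {n : ℕ} (i : P →ₗ[A] (Fin n → A))
    (p : (Fin n → A) →ₗ[A] P) (h : ∀ x, p (i x) = x) (W : Matrix (Fin n) (Fin n) A) (hW : IsUnit W)
    (θ : P →ₗ[A] P) (h1 : ∀ x, W.mulVec (i x) = i (θ x)) (h2 : ∀ x, p (W.mulVec x) = θ (p x)) :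
    Function.Bijective θ := by
  obtain ⟨V, hWV, hVW⟩ := isUnit_iff_exists.mp hW
  constructor
  · intro x y hxy
    have h3 : W.mulVec (i x) = W.mulVec (i y) := by rw [h1, h1, hxy]
    have h4 : V.mulVec (W.mulVec (i x)) = V.mulVec (W.mulVec (i y)) := by rw [h3]
    rw [Matrix.mulVec_mulVec, Matrix.mulVec_mulVec, hVW, Matrix.one_mulVec, Matrix.one_mulVec] at h4
    rw [← h x, h4, h y]
  · intro x
    refine ⟨p (V.mulVec (i x)), ?_⟩
    rw [← h2, Matrix.mulVec_mulVec, hWV, Matrix.one_mulVec, h]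

theorem AuxSys.partA {J : Ideal R} (hJ : J ≤ Ideal.jacobson ⊥) {G : ℕ → Submodule R B}
    (h : AuxSys J G A) (P P' : Type) [AddCommGroup P] [Module A P] [AddCommGroup P'] [Module A P']
    [Module.Finite A P] [Module.Projective A P] [Module.Finite A P'] [Module.Projective A P']
    (φ : B ⊗[A] P ≃ₗ[B] B ⊗[A] P') : Nonempty (P ≃ₗ[A] P') := by
  obtain ⟨n, p, i, -, -, hpi⟩ := Module.Finite.exists_comp_eq_id_of_projective A P
  obtain ⟨m, p', i', -, -, hpi'⟩ := Module.Finite.exists_comp_eq_id_of_projective A P'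
  obtain ⟨iB, pB, hB, hf⟩ := aux_bc (B := B) i p hpi
  obtain ⟨iB', pB', hB', hf'⟩ := aux_bc (B := B) i' p' hpi'
  have hx : ∀ x, p (i x) = x := fun x => LinearMap.congr_fun hpi x
  have hx' : ∀ x, p' (i' x) = x := fun x => LinearMap.congr_fun hpi' x
  obtain ⟨X, Y, h1, h2⟩ := h.iso hJ (LinearMap.toMatrix' (i ∘ₗ p)) (LinearMap.toMatrix' (i' ∘ₗ p'))
    (LinearMap.toMatrix' (iB' ∘ₗ φ.toLinearMap ∘ₗ pB))
    (LinearMap.toMatrix' (iB ∘ₗ φ.symm.toLinearMap ∘ₗ pB'))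
    (by
      rw [← hf, ← hf']
      simp only [← LinearMap.toMatrix'_comp]
      congr 1
      refine LinearMap.ext fun x => ?_
      simp [hB, hB'])
    (by
      rw [← hf, ← hf']
      simp only [← LinearMap.toMatrix'_comp]
      congr 1
      refine LinearMap.ext fun x => ?_
      simp [hB, hB'])
  let ψ : P →ₗ[A] P' := p' ∘ₗ Matrix.toLin' X ∘ₗ i
  let χ : P' →ₗ[A] P := p ∘ₗ Matrix.toLin' Y ∘ₗ i'
  have b1 : Function.Bijective (χ ∘ₗ ψ) := by
    refine aux_bij i p hx _ h1 _ (fun x => ?_) (fun x => ?_)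
    · simp [Matrix.add_mulVec, Matrix.sub_mulVec, ← Matrix.mulVec_mulVec, LinearMap.toMatrix'_mulVec,
        ψ, χ, hx]
    · simp [Matrix.add_mulVec, Matrix.sub_mulVec, ← Matrix.mulVec_mulVec, LinearMap.toMatrix'_mulVec,
        ψ, χ, hx]
  have b2 : Function.Bijective (ψ ∘ₗ χ) := by
    refine aux_bij i' p' hx' _ h2 _ (fun x => ?_) (fun x => ?_)
    · simp [Matrix.add_mulVec, Matrix.sub_mulVec, ← Matrix.mulVec_mulVec, LinearMap.toMatrix'_mulVec,
        ψ, χ, hx']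
    · simp [Matrix.add_mulVec, Matrix.sub_mulVec, ← Matrix.mulVec_mulVec, LinearMap.toMatrix'_mulVec,
        ψ, χ, hx']
  rw [LinearMap.coe_comp] at b1 b2
  exact ⟨LinearEquiv.ofBijective ψ ⟨b1.1.of_comp, b2.2.of_comp⟩⟩

theorem AuxSys.partB {J : Ideal R} (hH : HenselianRing R J) {G : ℕ → Submodule R B}
    (h : AuxSys J G A) (Q : Type) [AddCommGroup Q] [Module B Q]
    [Module.Finite B Q] [Module.Projective B Q] :
    ∃ (P : Type) (_ : AddCommGroup P) (_ : Module A P),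
      Module.Finite A P ∧ Module.Projective A P ∧ Nonempty (B ⊗[A] P ≃ₗ[B] Q) := by
  obtain ⟨n, q, j, -, -, hqj⟩ := Module.Finite.exists_comp_eq_id_of_projective B Q
  have hx : ∀ x, q (j x) = x := fun x => LinearMap.congr_fun hqj x
  obtain ⟨e, u, he, hu, heu⟩ := h.idem hH (LinearMap.toMatrix' (j ∘ₗ q)) (by
    rw [← LinearMap.toMatrix'_comp]
    congr 1
    refine LinearMap.ext fun x => ?_
    simp [hx])
  obtain ⟨v, huv, hvu⟩ := isUnit_iff_exists.mp hu
  let ε := Matrix.toLin' e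
  have hεε : ∀ x, ε (ε x) = ε x := fun x => by
    simp [ε, he]
  have hpi : ε.rangeRestrict ∘ₗ (LinearMap.range ε).subtype = LinearMap.id := by
    refine LinearMap.ext ?_
    rintro ⟨_, x, rfl⟩
    exact Subtype.ext (hεε x)
  obtain ⟨iB, pB, hB, hf⟩ := aux_bc (B := B) _ _ hpi
  have hE : LinearMap.toMatrix' ((LinearMap.range ε).subtype ∘ₗ ε.rangeRestrict) = e := by
    have : (LinearMap.range ε).subtype ∘ₗ ε.rangeRestrict = ε := rfl
    rw [this, LinearMap.toMatrix'_toLin']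
  rw [hE] at hf
  have k1 : ∀ x, iB (pB (u.mulVec x)) = u.mulVec (j (q x)) := by
    intro x
    have := congr(Matrix.mulVec $heu x)
    rw [← hf, ← Matrix.mulVec_mulVec, ← Matrix.mulVec_mulVec, LinearMap.toMatrix'_mulVec,
      LinearMap.toMatrix'_mulVec] at this
    exact this
  have k2 : ∀ x, j (q (v.mulVec x)) = v.mulVec (iB (pB x)) := by
    intro x
    have := congr(Matrix.mulVec v $(k1 (v.mulVec x)))
    simp only [Matrix.mulVec_mulVec, huv, hvu, Matrix.one_mulVec] at this
    exact this.symm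
  refine ⟨LinearMap.range ε, inferInstance, inferInstance,
    Module.Finite.of_surjective ε.rangeRestrict ε.surjective_rangeRestrict,
    Module.Projective.of_split _ _ hpi,
    ⟨LinearEquiv.ofLinearMap (q ∘ₗ Matrix.toLin' v ∘ₗ iB) (pB ∘ₗ Matrix.toLin' u ∘ₗ j) ?_ ?_⟩⟩
  · refine LinearMap.ext fun x => ?_
    simp [k1, hx, Matrix.mulVec_mulVec, hvu]
  · refine LinearMap.ext fun x => ?_
    simp [k2, hB, Matrix.mulVec_mulVec, huv]
end Mods

section Conc

theorem aux_sys {R A S B : Type} [CommRing R] [CommRing A] [CommRing S] [CommRing B] [Algebra R A]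
    [Algebra R S] [Algebra S B] [Algebra A B] [Algebra R B] [IsScalarTower R A B]
    [IsScalarTower R S B] (t : R) (τ : S) (hτ : τ = algebraMap R S t) [IsLocalization.Away t A]
    [IsLocalization.Away τ B] (J : Ideal R) (K : ℕ → Ideal S)
    (C1 : ∀ (x : S) (m : ℕ), ∃ r : R, algebraMap R S r - x ∈ K m)
    (C2 : ∀ (r : R) (m : ℕ), algebraMap R S r ∈ K (m + 1) → ∃ s ∈ J, r = t ^ m * s)
    (C3 : ∀ x : S, τ * x = 0 → x = 0)
    (C4 : ∀ (x : S) (m : ℕ), x ∈ K (m + 1) ↔ ∃ y ∈ K 1, x = τ ^ m * y)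
    (C5 : K 1 ≤ Ideal.jacobson ⊥) :
    ∃ G : ℕ → Submodule R B, AuxSys J G A := by
  let G : ℕ → Submodule R B := fun m =>
    { carrier := {b | ∃ y ∈ K 1, b = algebraMap S B (τ ^ m * y)}
      zero_mem' := ⟨0, (K 1).zero_mem, by simp⟩
      add_mem' := by
        rintro _ _ ⟨y, hy, rfl⟩ ⟨z, hz, rfl⟩
        exact ⟨y + z, (K 1).add_mem hy hz, by rw [← map_add, mul_add]⟩
      smul_mem' := by
        rintro r _ ⟨y, hy, rfl⟩
        refine ⟨algebraMap R S r * y, (K 1).mul_mem_left _ hy, ?_⟩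
        rw [Algebra.smul_def, IsScalarTower.algebraMap_apply R S B, ← map_mul]
        congr 1; ring }
  have hinj : Function.Injective (algebraMap S B) := by
    refine IsLocalization.injective B (M := Submonoid.powers τ) ?_
    refine Submonoid.powers_le.mpr ?_
    rw [mem_nonZeroDivisors_iff]
    exact ⟨C3, fun x hx => C3 x (by rw [mul_comm]; exact hx)⟩
  have hcomm : ∀ r : R, algebraMap A B (algebraMap R A r) = algebraMap S B (algebraMap R S r) := by
    intro r
    rw [← IsScalarTower.algebraMap_apply, ← IsScalarTower.algebraMap_apply]
  have hut : ∀ k : ℕ, IsUnit (algebraMap R A (t ^ k)) := fun k => by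
    rw [map_pow]; exact (IsLocalization.Away.algebraMap_isUnit t).pow k
  have huτ : ∀ k : ℕ, IsUnit (algebraMap S B (τ ^ k)) := fun k => by
    rw [map_pow]; exact (IsLocalization.Away.algebraMap_isUnit τ).pow k
  have htτ : ∀ k : ℕ, algebraMap R S (t ^ k) = τ ^ k := fun k => by rw [hτ, map_pow]
  refine ⟨G, ?_, ?_, ?_, ?_, ?_, ?_⟩
  · intro b m
    obtain ⟨k, x, hx⟩ := IsLocalization.Away.surj τ b
    obtain ⟨r, hr⟩ := C1 x (m + k + 1)
    obtain ⟨y, hy, hxy⟩ := (C4 _ _).mp hr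
    obtain ⟨w, hw⟩ := (hut k).exists_right_inv
    refine ⟨algebraMap R A r * w, y, hy, ?_⟩
    refine (huτ k).mul_right_cancel ?_
    have h1 : algebraMap A B w * algebraMap S B (τ ^ k) = 1 := by
      rw [← htτ, ← hcomm, ← map_mul, mul_comm, hw, map_one]
    rw [sub_mul, map_mul, mul_assoc, h1, mul_one, hcomm, map_pow, hx, ← map_sub, hxy, ← map_pow,
      ← map_mul]
    congr 1; ring
  · intro b
    obtain ⟨k, x, hx⟩ := IsLocalization.Away.surj τ b
    refine ⟨k, ?_⟩
    rintro _ ⟨y, hy, rfl⟩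
    refine ⟨x * y, (K 1).mul_mem_left _ hy, ?_⟩
    rw [pow_zero, one_mul, map_mul, map_mul, ← hx, map_pow, mul_assoc]
  · rintro a ⟨y, hy, hay⟩
    rw [pow_zero, one_mul] at hay
    obtain ⟨l, r, hr⟩ := IsLocalization.Away.surj t a
    have h1 : algebraMap R S r = τ ^ l * y := by
      apply hinj
      rw [← hcomm, ← hr, map_mul, hay, ← map_pow, hcomm, htτ, map_mul, mul_comm]
    obtain ⟨s, hs, hrs⟩ := C2 r l ((C4 _ _).mpr ⟨y, hy, h1⟩)
    refine ⟨s, hs, (hut l).mul_right_cancel ?_⟩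
    rw [map_pow, hr, hrs, map_mul, map_pow, mul_comm]
  · intro n D hD
    refine aux_unit_A C5 D fun i j => ?_
    obtain ⟨y, hy, h⟩ := hD i j
    exact ⟨y, hy, by rw [h, pow_zero, one_mul]⟩
  · rintro _ ⟨y, hy, rfl⟩ _ ⟨z, hz, rfl⟩
    exact ⟨y * z, (K 1).mul_mem_left _ hz, by simp⟩
  · rintro m n hmn _ ⟨y, hy, rfl⟩
    refine ⟨τ ^ (n - m) * y, (K 1).mul_mem_left _ hy, ?_⟩
    rw [← mul_assoc, ← pow_add, Nat.add_sub_cancel' hmn]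

variable (R : Type) [CommRing R] (t : R) (I : Ideal R)

/-- The kernel of the projection to level `m`. -/
def auxK (m : ℕ) : Ideal (tIComp R t I) :=
  RingHom.ker ((Pi.evalRingHom (fun n : ℕ => R ⧸ tPowIdeal R t I n) m).comp (tIComp R t I).subtype)

theorem aux_memK {m : ℕ} {x : tIComp R t I} : x ∈ auxK R t I m ↔ x.1 m = 0 := Iff.rfl

theorem aux_memPow {m : ℕ} {r : R} : r ∈ tPowIdeal R t I m ↔ ∃ z ∈ I, t ^ m * z = r :=
  Ideal.mem_span_singleton_mul

theorem aux_lvl (x : tIComp R t I) {n m : ℕ} (h : n ≤ m) {r : R}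
    (hr : Ideal.Quotient.mk (tPowIdeal R t I m) r = x.1 m) :
    Ideal.Quotient.mk (tPowIdeal R t I n) r = x.1 n := by
  rw [← x.2 n m h, ← hr]; rfl

theorem aux_pow_anti {n m : ℕ} (h : n ≤ m) : tPowIdeal R t I m ≤ tPowIdeal R t I n :=
  Ideal.mul_mono (Ideal.span_singleton_le_span_singleton.mpr (pow_dvd_pow t h)) le_rfl

theorem aux_ext {x y : tIComp R t I} (h : ∀ n, x.1 n = y.1 n) : x = y := Subtype.ext (funext h)

theorem aux_C1 (x : tIComp R t I) (m : ℕ) : ∃ r : R, toTIComp R t I r - x ∈ auxK R t I m := by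
  obtain ⟨r, hr⟩ := Ideal.Quotient.mk_surjective (x.1 m)
  refine ⟨r, ?_⟩
  rw [aux_memK]
  change Ideal.Quotient.mk _ r - x.1 m = 0
  rw [hr, sub_self]

theorem aux_C2 (r : R) (m : ℕ) (h : toTIComp R t I r ∈ auxK R t I (m + 1)) :
    ∃ s ∈ Ideal.span {t} * I, r = t ^ m * s := by
  have h' : r ∈ tPowIdeal R t I (m + 1) := Ideal.Quotient.eq_zero_iff_mem.mp h
  obtain ⟨z, hz, rfl⟩ := (aux_memPow R t I).mp h'
  exact ⟨t * z, Ideal.mem_span_singleton_mul.mpr ⟨z, hz, rfl⟩, by ring⟩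

theorem aux_cancel (hreg : ∀ x : R, t * x = 0 → x = 0) (m : ℕ) (x y : R) (h : t ^ m * x = t ^ m * y) : x = y := by
  induction m generalizing x y with
  | zero => simpa using h
  | succ m ih =>
    refine sub_eq_zero.mp (hreg _ ?_)
    rw [mul_sub, sub_eq_zero]
    apply ih
    rw [← mul_assoc, ← mul_assoc, ← pow_succ]; exact h

theorem aux_C3 (hreg : ∀ x : R, t * x = 0 → x = 0) (x : tIComp R t I) (h : toTIComp R t I t * x = 0) : x = 0 := by
  refine aux_ext R t I fun n => ?_
  obtain ⟨r, hr⟩ := Ideal.Quotient.mk_surjective (x.1 (n + 1))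
  have h1 : Ideal.Quotient.mk (tPowIdeal R t I (n + 1)) t * x.1 (n + 1) = 0 :=
    congr_fun (congr_arg Subtype.val h) (n + 1)
  rw [← hr, ← map_mul, Ideal.Quotient.eq_zero_iff_mem, aux_memPow] at h1
  obtain ⟨z, hz, hzr⟩ := h1
  rw [← aux_lvl R t I x (Nat.le_succ n) hr]
  refine Ideal.Quotient.eq_zero_iff_mem.mpr ((aux_memPow R t I).mpr ⟨z, hz, ?_⟩)
  refine aux_cancel R t hreg 1 _ _ ?_
  rw [pow_one, ← hzr]; ring

theorem aux_C4 (hreg : ∀ x : R, t * x = 0 → x = 0) 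
    (x : tIComp R t I) (m : ℕ) : x ∈ auxK R t I (m + 1) ↔
    ∃ y ∈ auxK R t I 1, x = toTIComp R t I t ^ m * y := by
  constructor
  · intro hx
    rw [aux_memK] at hx
    choose r hr using fun n : ℕ => Ideal.Quotient.mk_surjective (x.1 (n + m + 1))
    have h1 : ∀ n, ∃ y ∈ tPowIdeal R t I 1, t ^ m * y = r n := by
      intro n
      have h2 := aux_lvl R t I x (show m + 1 ≤ n + m + 1 by omega) (hr n)
      rw [hx, Ideal.Quotient.eq_zero_iff_mem, aux_memPow] at h2
      obtain ⟨z, hz, h3⟩ := h2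
      exact ⟨t * z, (aux_memPow R t I).mpr ⟨z, hz, by ring⟩, by rw [← h3]; ring⟩
    choose y hy hyr using h1
    let Y : tIComp R t I := ⟨fun n => Ideal.Quotient.mk _ (y n), by
      intro n k hnk
      change Ideal.Quotient.mk _ (y k) = Ideal.Quotient.mk _ (y n)
      rw [Ideal.Quotient.eq]
      have h2 := aux_lvl R t I x (show n + m + 1 ≤ k + m + 1 by omega) (hr k)
      rw [← hr n, Ideal.Quotient.eq, aux_memPow] at h2
      obtain ⟨z, hz, h3⟩ := h2
      refine (aux_memPow R t I).mpr ⟨t * z, I.mul_mem_left _ hz, ?_⟩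
      refine aux_cancel R t hreg m _ _ ?_
      rw [mul_sub, hyr, hyr, ← h3]; ring⟩
    refine ⟨Y, ?_, ?_⟩
    · rw [aux_memK]
      exact Ideal.Quotient.eq_zero_iff_mem.mpr (hy 1)
    · refine aux_ext R t I fun n => ?_
      rw [← aux_lvl R t I x (show n ≤ n + m + 1 by omega) (hr n), ← hyr n, map_mul, map_pow]
      rfl
  · rintro ⟨y, hy, rfl⟩
    rw [aux_memK] at hy ⊢
    obtain ⟨r, hr⟩ := Ideal.Quotient.mk_surjective (y.1 (m + 1))
    have h2 := aux_lvl R t I y (show 1 ≤ m + 1 by omega) hr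
    rw [hy, Ideal.Quotient.eq_zero_iff_mem, aux_memPow] at h2
    obtain ⟨z, hz, h3⟩ := h2
    change Ideal.Quotient.mk (tPowIdeal R t I (m + 1)) t ^ m * y.1 (m + 1) = 0
    rw [← hr, ← map_pow, ← map_mul]
    exact Ideal.Quotient.eq_zero_iff_mem.mpr ((aux_memPow R t I).mpr ⟨z, hz, by rw [← h3]; ring⟩)

theorem aux_C5 (hJ : Ideal.span {t} * I ≤ Ideal.jacobson ⊥) :
    auxK R t I 1 ≤ Ideal.jacobson ⊥ := by
  intro x hx
  rw [Ideal.mem_jacobson_bot]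
  intro y
  have hxy := (auxK R t I 1).mul_mem_right y hx
  generalize x * y = z at hxy
  rw [aux_memK] at hxy
  have hu : ∀ n, ∃ w : R ⧸ tPowIdeal R t I n, (z.1 n + 1) * w = 1 := by
    intro n
    obtain ⟨r, hr⟩ := Ideal.Quotient.mk_surjective (z.1 (n + 1))
    have h2 := aux_lvl R t I z (show 1 ≤ n + 1 by omega) hr
    rw [hxy, Ideal.Quotient.eq_zero_iff_mem, tPowIdeal, pow_one] at h2
    have h3 := Ideal.mem_jacobson_bot.mp (hJ h2) 1
    rw [mul_one] at h3
    have h4 := h3.map (Ideal.Quotient.mk (tPowIdeal R t I n))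
    rw [map_add, map_one, aux_lvl R t I z (Nat.le_succ n) hr] at h4
    exact h4.exists_right_inv
  choose w hw using hu
  refine IsUnit.of_mul_eq_one (⟨w, ?_⟩ : tIComp R t I) ?_
  · intro n m hnm
    have h1 := congr_arg (tTrans R t I n m hnm) (hw m)
    rw [map_mul, map_add, map_one, z.2 n m hnm] at h1
    calc _ = tTrans R t I n m hnm (w m) * ((z.1 n + 1) * w n) := by rw [hw, mul_one]
      _ = ((z.1 n + 1) * tTrans R t I n m hnm (w m)) * w n := by ring
      _ = w n := by rw [h1, one_mul]
  · exact aux_ext R t I hw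

end Conc

/-- Let `t ∈ R` be a non-zero-divisor and `I ⊆ R` an ideal such that the
pair `(R, tI)` is henselian, and let `R^ := lim_n R/tⁿI` be the `(t,I)`-adic completion.
Then base change along `R[t⁻¹] → R^[t⁻¹]` is a bijection on isomorphism classes of finitely
generated projective modules: (a) two finitely generated projective `R[t⁻¹]`-modules with
isomorphic base changes are isomorphic; (b) every finitely generated projective
`R^[t⁻¹]`-module arises (up to isomorphism) by base change. -/
theorem stmt_15 (R : Type) [CommRing R] (t : R)
    (hreg : ∀ x : R, t * x = 0 → x = 0)
    (I : Ideal R) (hhens : HenselianRing R (Ideal.span {t} * I)) :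
    letI : Algebra (Localization.Away t) (Localization.Away (toTIComp R t I t)) :=
      (locMap R t I).toAlgebra
    (∀ (P P' : Type) [AddCommGroup P] [Module (Localization.Away t) P]
        [AddCommGroup P'] [Module (Localization.Away t) P'],
        Module.Finite (Localization.Away t) P → Module.Projective (Localization.Away t) P →
        Module.Finite (Localization.Away t) P' → Module.Projective (Localization.Away t) P' →
        Nonempty
          ((TensorProduct (Localization.Away t) (Localization.Away (toTIComp R t I t)) P)
            ≃ₗ[Localization.Away (toTIComp R t I t)]
           (TensorProduct (Localization.Away t) (Localization.Away (toTIComp R t I t)) P')) →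
        Nonempty (P ≃ₗ[Localization.Away t] P'))
    ∧ (∀ (Q : Type) [AddCommGroup Q] [Module (Localization.Away (toTIComp R t I t)) Q],
        Module.Finite (Localization.Away (toTIComp R t I t)) Q →
        Module.Projective (Localization.Away (toTIComp R t I t)) Q →
        ∃ (P : Type) (_ : AddCommGroup P) (_ : Module (Localization.Away t) P),
          Module.Finite (Localization.Away t) P ∧
          Module.Projective (Localization.Away t) P ∧
          Nonempty
            ((TensorProduct (Localization.Away t) (Localization.Away (toTIComp R t I t)) P)
              ≃ₗ[Localization.Away (toTIComp R t I t)] Q)) := by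
  letI algAB : Algebra (Localization.Away t) (Localization.Away (toTIComp R t I t)) :=
    (locMap R t I).toAlgebra
  letI algRS : Algebra R (tIComp R t I) := (toTIComp R t I).toAlgebra
  haveI : IsScalarTower R (Localization.Away t) (Localization.Away (toTIComp R t I t)) := by
    refine IsScalarTower.of_algebraMap_eq fun r => ?_
    rw [IsScalarTower.algebraMap_apply R (tIComp R t I) (Localization.Away (toTIComp R t I t))]
    change _ = IsLocalization.Away.map (Localization.Away t) (Localization.Away (toTIComp R t I t))
      (toTIComp R t I) t _
    rw [IsLocalization.Away.map, IsLocalization.map_eq]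
    rfl
  obtain ⟨G, hG⟩ := aux_sys (A := Localization.Away t) (B := Localization.Away (toTIComp R t I t))
    t (toTIComp R t I t) rfl (Ideal.span {t} * I) (auxK R t I) (aux_C1 R t I) (aux_C2 R t I)
    (aux_C3 R t I hreg) (aux_C4 R t I hreg) (aux_C5 R t I hhens.jac)
  refine ⟨?_, ?_⟩
  · intro P P' _ _ _ _ h1 h2 h3 h4 h5
    exact h5.elim fun φ => hG.partA hhens.jac P P' φ
  · intro Q _ _ h1 h2
    exact hG.partB hhens Q
end

section
/- Let (A, I) be a henselian pair of commutative rings. Then the quotient map A → A/I induces a bijection from the set of idempotent elements of A onto the set of idempotent elements of A/I; i.e. every idempotent of A/I lifts to a unique idempotent of A. -/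
/-- Let (A, I) be a henselian pair of commutative rings. Then the quotient
map A → A/I induces a bijection from the set of idempotent elements of A onto the set of
idempotent elements of A/I. -/
theorem stmt_19 (A : Type) [CommRing A] (I : Ideal A) [HenselianRing A I] :
    Set.BijOn (Ideal.Quotient.mk I)
      {e : A | IsIdempotentElem e} {e : A ⧸ I | IsIdempotentElem e} := by
  refine ⟨fun e he => ?_, fun e he f hf hef => ?_, fun x hx => ?_⟩
  · exact IsIdempotentElem.map he (Ideal.Quotient.mk I)
  · have he' : e * e = e := he
    have hf' : f * f = f := hf
    have hd : e - f ∈ I := Ideal.Quotient.eq.mp hef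
    have hu := Ideal.mem_jacobson_bot.mp (HenselianRing.jac (I := I) hd) (-(e - f))
    have h0 : ((e - f) * (-(e - f)) + 1) * (e - f) = 0 := by
      linear_combination (-e + 3 * f - 1) * he' + (-3 * e + f + 1) * hf'
    exact sub_eq_zero.mp (hu.mul_right_eq_zero.mp h0)
  · obtain ⟨a, rfl⟩ := Ideal.Quotient.mk_surjective x
    have hx' : Ideal.Quotient.mk I a * Ideal.Quotient.mk I a = Ideal.Quotient.mk I a := hx
    obtain ⟨b, hb, hba⟩ := HenselianRing.is_henselian (I := I)
      (Polynomial.X ^ 2 - Polynomial.X : Polynomial A)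
      (by
        nontriviality A
        refine Polynomial.Monic.sub_of_left (Polynomial.monic_X_pow 2) ?_
        rw [Polynomial.degree_X_pow, Polynomial.degree_X]
        norm_num) a
      (by
        rw [← Ideal.Quotient.eq_zero_iff_mem]
        simp only [Polynomial.eval_sub, Polynomial.eval_pow, Polynomial.eval_X, map_sub, map_pow]
        linear_combination hx')
      (by
        refine IsUnit.of_mul_eq_one (2 * Ideal.Quotient.mk I a - 1) ?_
        simp
        linear_combination 4 * hx')
    refine ⟨b, ?_, Ideal.Quotient.eq.mpr hba⟩
    have h : b ^ 2 - b = 0 := by simpa [Polynomial.IsRoot] using hb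
    change b * b = b
    linear_combination h
end
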